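/- (1/(4π⁴))·∫₀^π∫₀^π∫₀^π∫₀^π (1 − (1/4)(cos φ₁ + cos φ₂ + cos φ₃ + cos φ₄))^{-1} dφ₁ dφ₂ dφ₃ dφ₄ = (2/π³)·∫₀^∞ 𝒦₊(x)·𝒦₋(x)·(1+x²)^{-1} dx, where for real x ≠ 0, 𝒦₊(x) = (π/2)·Σ_{n=0}^∞ [((1/2)_n / n!)²]·(1+ix)^{−2n} and 𝒦₋(x) = (π/2)·Σ_{n=0}^∞ [((1/2)_n / n!)²]·(1−ix)^{−2n}; since 𝒦₋(x) is the complex conjugate of 𝒦₊(x), the integrand is real and nonnegative. -/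

import Mathlib

open Real MeasureTheory Set

/-- Modified Bessel function `I₀(t) = (1/π)∫₀^π exp(t cos θ) dθ`. -/
noncomputable def I0 (t : ℝ) : ℝ := (1 / π) * ∫ θ in (0:ℝ)..π, exp (t * cos θ)

/-- Modified Bessel function `K₀(t) = ∫₀^∞ exp(−t cosh u) du`. -/
noncomputable def K0 (t : ℝ) : ℝ := ∫ u in Ioi (0:ℝ), exp (-(t * Real.cosh u))

/-- Rising factorial `(a)ₙ = a(a+1)⋯(a+n−1)`. -/
noncomputable def ris (a : ℝ) (n : ℕ) : ℝ := ∏ k ∈ Finset.range n, (a + k)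

/-- Generalized hypergeometric series `ₚF_q(a; b | x)`. -/
noncomputable def pFq (a b : List ℝ) (x : ℝ) : ℝ :=
  ∑' n : ℕ, ((a.map fun p => ris p n).prod / (b.map fun q => ris q n).prod) * x ^ n
    / (n.factorial : ℝ)

/-- `𝒦₊(x) = (π/2)·Σ ((1/2)ₙ/n!)²·(1+ix)^(−2n)`. -/
noncomputable def Kp (x : ℝ) : ℂ :=
  ((π / 2 : ℝ) : ℂ) *
    ∑' n : ℕ, (((ris (1/2) n / (n.factorial : ℝ))^2 : ℝ) : ℂ) *
      (((1 : ℂ) + (x : ℂ) * Complex.I) ^ (2 * n))⁻¹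

/-- `𝒦₋(x) = (π/2)·Σ ((1/2)ₙ/n!)²·(1−ix)^(−2n)`. -/
noncomputable def Km (x : ℝ) : ℂ :=
  ((π / 2 : ℝ) : ℂ) *
    ∑' n : ℕ, (((ris (1/2) n / (n.factorial : ℝ))^2 : ℝ) : ℂ) *
      (((1 : ℂ) - (x : ℂ) * Complex.I) ^ (2 * n))⁻¹

/-!
Both sides are multiples of the double series `∑ w_m² w_n² C(2m+2n, 2m) / 4^(m+n)`, where
`w_n = (1/2)ₙ / n!`.

On the left, expand `1 / (1 - X)` geometrically, `X` being the mean of the four cosines. The odd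
moments of `X` vanish, and the even ones come from those of `cos φ₁ + cos φ₂`, which are
`π² 4ⁿ w_n²` by Vandermonde's identity.

On the right, multiply the two series and integrate termwise over `ℝ`, using Cauchy's beta integral
`∫ (1 + ix)^(-a-1) (1 - ix)^(-b-1) dx = π C(a+b, a) / 2^(a+b)`. The absolute values integrate to
`π w_(m+n)`, so the interchange is licensed by the convergence of `∑ w_m² w_n² w_(m+n)`.
-/

/-! ### Wallis ratios -/

open Finset.HasAntidiagonal (antidiagonal)

/-- The Wallis ratio `(2n)! / (4ⁿ (n!)²) = (1/2)ₙ / n!`, the mean of `cos²ⁿ`. -/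
noncomputable def wallisRatio (n : ℕ) : ℝ := n.centralBinom / 4 ^ n

lemma wallisRatio_zero : wallisRatio 0 = 1 := by simp [wallisRatio]

lemma wallisRatio_pos (n : ℕ) : 0 < wallisRatio n :=
  div_pos (mod_cast n.centralBinom_pos) (by positivity)

lemma wallisRatio_succ (n : ℕ) :
    wallisRatio (n + 1) = wallisRatio n * ((2 * n + 1) / (2 * n + 2)) := by
  have h : ((n : ℝ) + 1) * (n + 1).centralBinom = 2 * (2 * n + 1) * n.centralBinom :=
    mod_cast n.succ_mul_centralBinom_succ
  simp only [wallisRatio, pow_succ]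
  field_simp
  linear_combination 2 * h

lemma ris_half_div_factorial (n : ℕ) : ris (1 / 2) n / n.factorial = wallisRatio n := by
  induction n with
  | zero => simp [ris, wallisRatio]
  | succ n ih =>
    have hfact : (n.factorial : ℝ) ≠ 0 := mod_cast n.factorial_ne_zero
    rw [wallisRatio_succ, ← ih, ris, ris, Finset.prod_range_succ, Nat.factorial_succ]
    push_cast
    field_simp
    ring

lemma antitone_wallisRatio : Antitone wallisRatio :=
  antitone_nat_of_succ_le fun n => by
    rw [wallisRatio_succ]
    refine mul_le_of_le_one_right (wallisRatio_pos n).le ?_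
    rw [div_le_one (by positivity)]
    linarith

lemma wallisRatio_le_one (n : ℕ) : wallisRatio n ≤ 1 :=
  wallisRatio_zero ▸ antitone_wallisRatio n.zero_le

lemma wallisRatio_sq_le (n : ℕ) : wallisRatio n ^ 2 ≤ 1 / (n + 1) := by
  induction n with
  | zero => simp [wallisRatio_zero]
  | succ n ih =>
    calc wallisRatio (n + 1) ^ 2
        = wallisRatio n ^ 2 * ((2 * n + 1) / (2 * n + 2) : ℝ) ^ 2 := by
          rw [wallisRatio_succ, mul_pow]
      _ ≤ 1 / (n + 1) * ((2 * n + 1) / (2 * n + 2) : ℝ) ^ 2 := by gcongr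
      _ ≤ 1 / ((n + 1 : ℕ) + 1) := by
        push_cast
        field_simp
        nlinarith

lemma wallisRatio_sq_mul_sqrt_le (n : ℕ) :
    wallisRatio n ^ 2 * √(wallisRatio n) ≤ ((n + 1 : ℕ) : ℝ) ^ (-(5 / 4) : ℝ) := by
  have hw := (wallisRatio_pos n).le
  calc wallisRatio n ^ 2 * √(wallisRatio n)
      = (wallisRatio n ^ 2) ^ (5 / 4 : ℝ) := by
        rw [sqrt_eq_rpow, ← rpow_natCast, ← rpow_add (wallisRatio_pos n), ← rpow_mul hw]
        norm_num
    _ ≤ (((n + 1 : ℕ) : ℝ)⁻¹) ^ (5 / 4 : ℝ) := by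
        gcongr
        simpa using wallisRatio_sq_le n
    _ = ((n + 1 : ℕ) : ℝ) ^ (-(5 / 4) : ℝ) := by rw [rpow_neg_eq_inv_rpow]

lemma summable_wallisRatio_sq_mul_sqrt :
    Summable fun n => wallisRatio n ^ 2 * √(wallisRatio n) :=
  .of_nonneg_of_le (fun _ => by positivity) wallisRatio_sq_mul_sqrt_le <|
    (summable_nat_add_iff 1).2 <| Real.summable_nat_rpow.2 (by norm_num)

lemma wallisRatio_add_le (m n : ℕ) :
    wallisRatio (m + n) ≤ √(wallisRatio m) * √(wallisRatio n) := by
  calc wallisRatio (m + n)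
      = √(wallisRatio (m + n)) * √(wallisRatio (m + n)) :=
        (mul_self_sqrt (wallisRatio_pos _).le).symm
    _ ≤ √(wallisRatio m) * √(wallisRatio n) := by
        gcongr <;> exact antitone_wallisRatio (by lia)

lemma summable_wallisRatio_sq_mul_sq_mul_add :
    Summable fun p : ℕ × ℕ =>
      wallisRatio p.1 ^ 2 * wallisRatio p.2 ^ 2 * wallisRatio (p.1 + p.2) := by
  have hs := summable_wallisRatio_sq_mul_sqrt
  refine .of_nonneg_of_le (fun p => ?_) (fun p => ?_)
    (hs.mul_of_nonneg hs (fun _ => by positivity) fun _ => by positivity)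
  · exact mul_nonneg (by positivity) (wallisRatio_pos _).le
  · rw [mul_mul_mul_comm]
    gcongr
    exact wallisRatio_add_le p.1 p.2

lemma wallisRatio_mul_wallisRatio_mul_choose (m n : ℕ) :
    wallisRatio m * wallisRatio n * (2 * (m + n)).choose (2 * m) =
      wallisRatio (m + n) * ((m + n).choose m * (m + n).choose n) := by
  have hfact (k : ℕ) : (k.factorial : ℝ) ≠ 0 := mod_cast k.factorial_ne_zero
  have hm := hfact m
  have hn := hfact n
  have hm2 := hfact (2 * m)
  have hn2 := hfact (2 * n)
  have hmn := hfact (m + n)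
  have hcentral (k : ℕ) : (k.centralBinom : ℝ) =
      (2 * k).factorial / (k.factorial * k.factorial) := by
    rw [Nat.centralBinom, two_mul, Nat.cast_add_choose]
  rw [← Nat.choose_symm_add]
  simp only [wallisRatio, hcentral, mul_add 2 m n, Nat.cast_add_choose, pow_add]
  field_simp

/-- The common coefficient of the double series, indexed by `ℕ × ℕ`, into which both sides of
`watson_one_eq_parseval` expand. -/
noncomputable def watsonTerm (p : ℕ × ℕ) : ℝ :=
  wallisRatio p.1 ^ 2 * wallisRatio p.2 ^ 2 *
    ((2 * (p.1 + p.2)).choose (2 * p.1) / 4 ^ (p.1 + p.2))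

lemma summable_watsonTerm : Summable watsonTerm := by
  refine .of_nonneg_of_le (fun p => ?_) (fun p => ?_) summable_wallisRatio_sq_mul_sq_mul_add
  · unfold watsonTerm
    positivity
  · unfold watsonTerm
    gcongr
    exact div_le_div_of_nonneg_right (mod_cast Nat.choose_le_centralBinom _ _) (by positivity)

/-! ### Even moments -/

lemma hasSum_sum_antidiagonal {A M : Type*} [AddCommMonoid A] [Finset.HasAntidiagonal A]
    [AddCommMonoid M] [TopologicalSpace M] [ContinuousAdd M] [RegularSpace M]
    {f : A × A → M} {s : M}
    (hf : HasSum f s) : HasSum (fun n => ∑ p ∈ antidiagonal n, f p) s := by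
  rw [← Finset.HasAntidiagonal.sigmaAntidiagonalEquivProd.hasSum_iff] at hf
  refine hf.sigma fun n => ?_
  rw [← Finset.sum_coe_sort]
  exact hasSum_fintype _

lemma sum_antidiagonal_two_mul {M : Type*} [AddCommMonoid M] {f : ℕ × ℕ → M}
    (hf : ∀ i j, f (2 * i + 1, j) = 0) (n : ℕ) :
    ∑ p ∈ antidiagonal (2 * n), f p =
      ∑ p ∈ antidiagonal n, f (2 * p.1, 2 * p.2) := by
  refine (Finset.sum_of_injOn (fun p : ℕ × ℕ => (2 * p.1, 2 * p.2)) ?_ ?_ ?_ fun _ _ => rfl).symm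
  · rintro ⟨i, j⟩ - ⟨k, l⟩ - h
    simpa using h
  · rintro ⟨i, j⟩ h
    have hn : i + j = n := by simpa using h
    simp [← hn, mul_add]
  · rintro ⟨i, j⟩ h hij
    rcases i.even_or_odd' with ⟨k, rfl | rfl⟩
    · have hn : 2 * k + j = 2 * n := by simpa using h
      refine absurd ⟨(k, n - k), ?_⟩ hij
      simp only [Finset.mem_coe, Finset.HasAntidiagonal.mem_antidiagonal, Prod.mk.injEq]
      lia
    · exact hf k j

lemma integrable_tsum_of_summable_integral_norm {α ι E : Type*} [MeasurableSpace α]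
    {μ : Measure α} [NormedAddCommGroup E] [CompleteSpace E] [Countable ι] {F : ι → α → E}
    (hF : ∀ i, Integrable (F i) μ) (hsum : Summable fun i => ∫ a, ‖F i a‖ ∂μ) :
    Integrable (fun a => ∑' i, F i a) μ := by
  have hL1 : ∑' i, ‖(hF i).toL1 (F i)‖ₑ ≠ ⊤ := by
    simpa only [tsum_enorm_ne_top_iff_summable_norm, L1.norm_of_fun_eq_integral_norm] using hsum
  refine (L1.integrable_coeFn (∑' i, (hF i).toL1 (F i))).congr ?_
  filter_upwards [Lp.coeFn_tsum hL1, ae_all_iff.2 fun i => (hF i).coeFn_toL1] with a htsum hcoe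
  simp only [htsum, hcoe]

lemma integral_prod_prod {α β γ δ E : Type*} [MeasurableSpace α] [MeasurableSpace β]
    [MeasurableSpace γ] [MeasurableSpace δ] [NormedAddCommGroup E] [NormedSpace ℝ E]
    {μ : Measure α} {ν : Measure β} {ρ : Measure γ} {σ : Measure δ}
    [SFinite μ] [SFinite ν] [SFinite ρ] [SFinite σ] {f : (α × β) × (γ × δ) → E}
    (hf : Integrable f ((μ.prod ν).prod (ρ.prod σ))) :
    ∫ z, f z ∂(μ.prod ν).prod (ρ.prod σ) =
      ∫ a, ∫ b, ∫ c, ∫ d, f ((a, b), (c, d)) ∂σ ∂ρ ∂ν ∂μ := by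
  have hinner : (fun y => ∫ w, f (y, w) ∂ρ.prod σ) =ᵐ[μ.prod ν]
      fun y => ∫ c, ∫ d, f (y, (c, d)) ∂σ ∂ρ := by
    filter_upwards [hf.prod_right_ae] with y hy using integral_prod _ hy
  rw [integral_prod _ hf, integral_congr_ae hinner,
    integral_prod _ (hf.integral_prod_left.congr hinner)]

section PowAdd

variable {α β : Type*} [MeasurableSpace α] [MeasurableSpace β] {μ : Measure α} {ν : Measure β}
  {X : α → ℝ} {Y : β → ℝ}

lemma integrable_add_pow_prod [SFinite ν] (hX : ∀ k : ℕ, Integrable (fun a => X a ^ k) μ)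
    (hY : ∀ k : ℕ, Integrable (fun b => Y b ^ k) ν) (k : ℕ) :
    Integrable (fun z : α × β => (X z.1 + Y z.2) ^ k) (μ.prod ν) := by
  simp_rw [(Commute.all (_ : ℝ) _).add_pow', nsmul_eq_mul]
  exact integrable_finsetSum _ fun p _ => ((hX p.1).mul_prod (hY p.2)).const_mul _

lemma integral_add_pow_prod [SFinite μ] [SFinite ν]
    (hX : ∀ k : ℕ, Integrable (fun a => X a ^ k) μ)
    (hY : ∀ k : ℕ, Integrable (fun b => Y b ^ k) ν) (k : ℕ) :
    ∫ z : α × β, (X z.1 + Y z.2) ^ k ∂μ.prod ν =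
      ∑ p ∈ antidiagonal k,
        (k.choose p.1 : ℝ) * ((∫ a, X a ^ p.1 ∂μ) * ∫ b, Y b ^ p.2 ∂ν) := by
  simp_rw [(Commute.all (_ : ℝ) _).add_pow', nsmul_eq_mul]
  rw [integral_finsetSum _ fun p _ => ((hX p.1).mul_prod (hY p.2)).const_mul _]
  refine Finset.sum_congr rfl fun p _ => ?_
  rw [integral_const_mul, integral_prod_mul (fun a => X a ^ p.1) (fun b => Y b ^ p.2)]

end PowAdd

/-- `X` has moments of all orders with respect to `μ`, the odd ones vanish, and the one of order
`2n` is `c n`. Neither `μ` nor `c` is normalised: `c 0` is the total mass of `μ`. -/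
structure HasEvenMoments {α : Type*} [MeasurableSpace α] (X : α → ℝ) (μ : Measure α)
    (c : ℕ → ℝ) : Prop where
  integrable_pow (k : ℕ) : Integrable (fun a => X a ^ k) μ
  integral_pow_odd (n : ℕ) : ∫ a, X a ^ (2 * n + 1) ∂μ = 0
  integral_pow_even (n : ℕ) : ∫ a, X a ^ (2 * n) ∂μ = c n

lemma tsum_pow_two_mul_mul_one_add {x : ℝ} (hx : |x| < 1) :
    ∑' n : ℕ, x ^ (2 * n) * (1 + x) = 1 / (1 - x) := by
  have hsq : x ^ 2 < 1 := (sq_lt_one_iff_abs_lt_one x).2 hx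
  have hsub : 1 - x ≠ 0 := by linarith [(abs_lt.1 hx).2]
  have hadd : 1 + x ≠ 0 := by linarith [(abs_lt.1 hx).1]
  simp_rw [pow_mul]
  rw [tsum_mul_right, tsum_geometric_of_lt_one (sq_nonneg x) hsq,
    show 1 - x ^ 2 = (1 - x) * (1 + x) by ring]
  field_simp

namespace HasEvenMoments

variable {α β : Type*} [MeasurableSpace α] [MeasurableSpace β] {μ : Measure α} {ν : Measure β}
  {X : α → ℝ} {Y : β → ℝ} {c d : ℕ → ℝ}

lemma const_mul (h : HasEvenMoments X μ c) (r : ℝ) :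
    HasEvenMoments (fun a => r * X a) μ fun n => r ^ (2 * n) * c n where
  integrable_pow k := by simpa only [mul_pow] using (h.integrable_pow k).const_mul _
  integral_pow_odd n := by simp only [mul_pow, integral_const_mul, h.integral_pow_odd, mul_zero]
  integral_pow_even n := by simp only [mul_pow, integral_const_mul, h.integral_pow_even]

lemma add_prod [SFinite μ] [SFinite ν] (hX : HasEvenMoments X μ c) (hY : HasEvenMoments Y ν d) :
    HasEvenMoments (fun z : α × β => X z.1 + Y z.2) (μ.prod ν) fun n =>
      ∑ p ∈ antidiagonal n, ((2 * n).choose (2 * p.1) : ℝ) * (c p.1 * d p.2) where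
  integrable_pow := integrable_add_pow_prod hX.integrable_pow hY.integrable_pow
  integral_pow_odd n := by
    rw [integral_add_pow_prod hX.integrable_pow hY.integrable_pow]
    refine Finset.sum_eq_zero fun p hp => ?_
    rw [Finset.HasAntidiagonal.mem_antidiagonal] at hp
    rcases p.1.even_or_odd' with ⟨i, hi | hi⟩
    · rw [show p.2 = 2 * (n - i) + 1 by lia, hY.integral_pow_odd, mul_zero, mul_zero]
    · rw [hi, hX.integral_pow_odd, zero_mul, mul_zero]
  integral_pow_even n := by
    rw [integral_add_pow_prod hX.integrable_pow hY.integrable_pow, sum_antidiagonal_two_mul]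
    · simp only [hX.integral_pow_even, hY.integral_pow_even]
    · intro i j
      rw [hX.integral_pow_odd, zero_mul, mul_zero]

lemma integrable_pow_mul_one_add (h : HasEvenMoments X μ c) (n : ℕ) :
    Integrable (fun a => X a ^ (2 * n) * (1 + X a)) μ := by
  simp only [mul_one_add, ← pow_succ]
  exact (h.integrable_pow _).add (h.integrable_pow _)

lemma integral_pow_mul_one_add (h : HasEvenMoments X μ c) (n : ℕ) :
    ∫ a, X a ^ (2 * n) * (1 + X a) ∂μ = c n := by
  simp only [mul_one_add, ← pow_succ]
  rw [integral_add (h.integrable_pow _) (h.integrable_pow _), h.integral_pow_even,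
    h.integral_pow_odd, add_zero]

-- Grouping the geometric series as `∑ x²ⁿ (1 + x)` makes its terms nonnegative.
lemma integral_norm_pow_mul_one_add (h : HasEvenMoments X μ c) (hX : ∀ᵐ a ∂μ, |X a| < 1)
    (n : ℕ) : ∫ a, ‖X a ^ (2 * n) * (1 + X a)‖ ∂μ = c n := by
  rw [← h.integral_pow_mul_one_add]
  refine integral_congr_ae ?_
  filter_upwards [hX] with a ha
  have : 0 ≤ 1 + X a := by linarith [(abs_lt.1 ha).1]
  exact norm_of_nonneg (mul_nonneg ((even_two_mul n).pow_nonneg _) this)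

lemma integrable_one_div_one_sub (h : HasEvenMoments X μ c) (hX : ∀ᵐ a ∂μ, |X a| < 1)
    (hc : Summable c) : Integrable (fun a => 1 / (1 - X a)) μ := by
  refine (integrable_tsum_of_summable_integral_norm h.integrable_pow_mul_one_add ?_).congr ?_
  · simpa only [h.integral_norm_pow_mul_one_add hX] using hc
  · filter_upwards [hX] with a ha using tsum_pow_two_mul_mul_one_add ha

lemma integral_one_div_one_sub (h : HasEvenMoments X μ c) (hX : ∀ᵐ a ∂μ, |X a| < 1)
    (hc : Summable c) : ∫ a, 1 / (1 - X a) ∂μ = ∑' n, c n := by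
  have hgeom : (fun a => 1 / (1 - X a)) =ᵐ[μ] fun a => ∑' n, X a ^ (2 * n) * (1 + X a) := by
    filter_upwards [hX] with a ha using (tsum_pow_two_mul_mul_one_add ha).symm
  rw [integral_congr_ae hgeom, ← integral_tsum_of_summable_integral_norm
    h.integrable_pow_mul_one_add (by simpa only [h.integral_norm_pow_mul_one_add hX] using hc)]
  simp only [h.integral_pow_mul_one_add]

end HasEvenMoments

/-! ### The Watson integral -/

/-- Lebesgue measure on `(0, π]`, over which each angle of the Watson integral runs. -/
noncomputable abbrev angleMeasure : Measure ℝ := volume.restrict (Ioc 0 π)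

lemma integral_cos_pow_even (n : ℕ) : ∫ x in (0)..π, cos x ^ (2 * n) = π * wallisRatio n := by
  induction n with
  | zero => simp [wallisRatio_zero]
  | succ n ih =>
    rw [mul_add_one, integral_cos_pow, ih, wallisRatio_succ]
    simp only [sin_pi, sin_zero]
    push_cast
    ring

lemma integral_cos_pow_odd (n : ℕ) : ∫ x in (0)..π, cos x ^ (2 * n + 1) = 0 := by
  induction n with
  | zero => simp
  | succ n ih =>
    rw [show 2 * (n + 1) + 1 = 2 * n + 1 + 2 by ring, integral_cos_pow, ih]
    simp

lemma hasEvenMoments_cos : HasEvenMoments cos angleMeasure fun n => π * wallisRatio n where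
  integrable_pow k := (continuous_cos.pow k).integrableOn_Ioc
  integral_pow_odd n := by
    rw [← intervalIntegral.integral_of_le pi_pos.le, integral_cos_pow_odd]
  integral_pow_even n := by
    rw [← intervalIntegral.integral_of_le pi_pos.le, integral_cos_pow_even]

lemma sum_antidiagonal_choose_mul_choose (n : ℕ) :
    ∑ p ∈ antidiagonal n, (n.choose p.1 * n.choose p.2 : ℝ) = 4 ^ n * wallisRatio n := by
  rw [wallisRatio, mul_div_cancel₀ _ (by positivity), Nat.centralBinom, two_mul,
    Nat.add_choose_eq]
  push_cast
  rfl

lemma hasEvenMoments_cos_add_cos :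
    HasEvenMoments (fun z : ℝ × ℝ => cos z.1 + cos z.2) (angleMeasure.prod angleMeasure)
      fun n => π ^ 2 * (4 ^ n * wallisRatio n ^ 2) := by
  convert hasEvenMoments_cos.add_prod hasEvenMoments_cos using 1
  funext n
  calc π ^ 2 * (4 ^ n * wallisRatio n ^ 2)
      = π ^ 2 * wallisRatio n * ∑ p ∈ antidiagonal n, (n.choose p.1 * n.choose p.2 : ℝ) := by
        rw [sum_antidiagonal_choose_mul_choose]
        ring
    _ = ∑ p ∈ antidiagonal n, ((2 * n).choose (2 * p.1) : ℝ) *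
          (π * wallisRatio p.1 * (π * wallisRatio p.2)) := by
        rw [Finset.mul_sum]
        refine Finset.sum_congr rfl fun p hp => ?_
        rw [← Finset.HasAntidiagonal.mem_antidiagonal.1 hp]
        linear_combination -π ^ 2 * wallisRatio_mul_wallisRatio_mul_choose p.1 p.2

/-- The structure function of the four-dimensional simple cubic lattice, with the four angles
paired so that it is a sum of independent copies of `cos z.1 + cos z.2`. -/
noncomputable def meanCos (z : (ℝ × ℝ) × (ℝ × ℝ)) : ℝ :=
  1 / 4 * (cos z.1.1 + cos z.1.2 + (cos z.2.1 + cos z.2.2))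

lemma hasEvenMoments_meanCos :
    HasEvenMoments meanCos
      ((angleMeasure.prod angleMeasure).prod (angleMeasure.prod angleMeasure))
      fun n => π ^ 4 * ∑ p ∈ antidiagonal n, watsonTerm p := by
  convert (hasEvenMoments_cos_add_cos.add_prod hasEvenMoments_cos_add_cos).const_mul (1 / 4)
    using 1
  · rfl
  · funext n
    rw [Finset.mul_sum, Finset.mul_sum]
    refine Finset.sum_congr rfl fun p hp => ?_
    have hp : p.1 + p.2 = n := Finset.HasAntidiagonal.mem_antidiagonal.1 hp
    have hpow : (1 / 4 : ℝ) ^ (2 * n) * (4 ^ p.1 * 4 ^ p.2) = 1 / 4 ^ n := by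
      rw [← pow_add, hp, pow_mul, ← mul_pow, ← one_div_pow]
      norm_num
    rw [watsonTerm, hp]
    linear_combination -(π ^ 4 * wallisRatio p.1 ^ 2 * wallisRatio p.2 ^ 2 *
      (2 * n).choose (2 * p.1)) * hpow

lemma abs_cos_lt_one_of_mem_Ioo {x : ℝ} (hx : x ∈ Ioo 0 π) : |cos x| < 1 := by
  rw [← sq_lt_one_iff_abs_lt_one, cos_sq', sub_lt_self_iff]
  exact pow_pos (sin_pos_of_mem_Ioo hx) 2

lemma ae_abs_cos_lt_one : ∀ᵐ x ∂angleMeasure, |cos x| < 1 := by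
  filter_upwards [ae_restrict_mem measurableSet_Ioc, Measure.ae_ne _ π] with x hx hne
  exact abs_cos_lt_one_of_mem_Ioo ⟨hx.1, hx.2.lt_of_ne hne⟩

lemma ae_abs_meanCos_lt_one :
    ∀ᵐ z ∂(angleMeasure.prod angleMeasure).prod (angleMeasure.prod angleMeasure),
      |meanCos z| < 1 := by
  have hfst := Measure.quasiMeasurePreserving_fst (ν := angleMeasure.prod angleMeasure) |>.ae <|
    Measure.quasiMeasurePreserving_fst (ν := angleMeasure) |>.ae ae_abs_cos_lt_one
  filter_upwards [hfst] with z hz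
  have h₁₂ := abs_le.1 (abs_cos_le_one z.1.2)
  have h₂₁ := abs_le.1 (abs_cos_le_one z.2.1)
  have h₂₂ := abs_le.1 (abs_cos_le_one z.2.2)
  rw [meanCos, abs_lt]
  constructor <;> linarith [abs_lt.1 hz]

lemma hasSum_watsonTerm_antidiagonal :
    HasSum (fun n => π ^ 4 * ∑ p ∈ antidiagonal n, watsonTerm p) (π ^ 4 * ∑' p, watsonTerm p) :=
  (hasSum_sum_antidiagonal summable_watsonTerm.hasSum).mul_left _

theorem watson_integral_eq_tsum :
    (∫ p1 in (0 : ℝ)..π, ∫ p2 in (0 : ℝ)..π, ∫ p3 in (0 : ℝ)..π, ∫ p4 in (0 : ℝ)..π,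
      1 / (1 - 1 / 4 * (cos p1 + cos p2 + cos p3 + cos p4))) = π ^ 4 * ∑' p, watsonTerm p := by
  have hsum := hasSum_watsonTerm_antidiagonal
  have hint := hasEvenMoments_meanCos.integrable_one_div_one_sub ae_abs_meanCos_lt_one hsum.summable
  rw [← hsum.tsum_eq, ← hasEvenMoments_meanCos.integral_one_div_one_sub ae_abs_meanCos_lt_one
    hsum.summable, integral_prod_prod hint]
  simp only [intervalIntegral.integral_of_le pi_pos.le, meanCos, add_assoc]

/-! ### Cauchy's beta integral -/

/-- The integrand of Cauchy's beta integral, for natural exponents. -/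
noncomputable def cauchyBetaIntegrand (p q : ℕ) (x : ℝ) : ℂ :=
  ((1 + x * Complex.I) ^ p)⁻¹ * ((1 - x * Complex.I) ^ q)⁻¹

lemma norm_one_add_mul_I (x : ℝ) : ‖(1 + x * Complex.I : ℂ)‖ = √(1 + x ^ 2) := by
  simpa using Complex.norm_add_mul_I 1 x

lemma norm_one_sub_mul_I (x : ℝ) : ‖(1 - x * Complex.I : ℂ)‖ = √(1 + x ^ 2) := by
  simpa [sub_eq_add_neg] using norm_one_add_mul_I (-x)

lemma one_add_mul_I_ne_zero (x : ℝ) : (1 + x * Complex.I : ℂ) ≠ 0 := by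
  rw [← norm_pos_iff, norm_one_add_mul_I]
  positivity

lemma one_sub_mul_I_ne_zero (x : ℝ) : (1 - x * Complex.I : ℂ) ≠ 0 := by
  rw [← norm_pos_iff, norm_one_sub_mul_I]
  positivity

lemma one_le_sqrt_one_add_sq (x : ℝ) : 1 ≤ √(1 + x ^ 2) := by
  rw [one_le_sqrt]
  linarith [sq_nonneg x]

lemma norm_cauchyBetaIntegrand (p q : ℕ) (x : ℝ) :
    ‖cauchyBetaIntegrand p q x‖ = (√(1 + x ^ 2) ^ (p + q))⁻¹ := by
  rw [cauchyBetaIntegrand, norm_mul, norm_inv, norm_inv, norm_pow, norm_pow, norm_one_add_mul_I,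
    norm_one_sub_mul_I, ← mul_inv, ← pow_add]

lemma cauchyBetaIntegrand_self (n : ℕ) (x : ℝ) :
    cauchyBetaIntegrand n n x = (((1 + x ^ 2) ^ n)⁻¹ : ℝ) := by
  have hmul : (1 + x * Complex.I) * (1 - x * Complex.I) = 1 + (x : ℂ) ^ 2 := by
    linear_combination -(x : ℂ) ^ 2 * Complex.I_sq
  rw [cauchyBetaIntegrand, ← mul_inv, ← mul_pow, hmul]
  push_cast
  rfl

lemma cauchyBetaIntegrand_neg (p q : ℕ) (x : ℝ) :
    cauchyBetaIntegrand p q (-x) = cauchyBetaIntegrand q p x := by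
  simp [cauchyBetaIntegrand, sub_eq_add_neg, mul_comm]

lemma cauchyBetaIntegrand_succ_succ (p q : ℕ) (x : ℝ) :
    cauchyBetaIntegrand (p + 1) (q + 1) x =
      (cauchyBetaIntegrand (p + 1) q x + cauchyBetaIntegrand p (q + 1) x) / 2 := by
  have hadd := one_add_mul_I_ne_zero x
  have hsub := one_sub_mul_I_ne_zero x
  simp only [cauchyBetaIntegrand]
  field_simp
  ring

lemma continuous_cauchyBetaIntegrand (p q : ℕ) : Continuous (cauchyBetaIntegrand p q) :=
  .mul (.inv₀ (by fun_prop) fun x => pow_ne_zero p (one_add_mul_I_ne_zero x))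
    (.inv₀ (by fun_prop) fun x => pow_ne_zero q (one_sub_mul_I_ne_zero x))

lemma integrable_cauchyBetaIntegrand {p q : ℕ} (h : 2 ≤ p + q) :
    Integrable (cauchyBetaIntegrand p q) := by
  refine integrable_inv_one_add_sq.mono'
    (continuous_cauchyBetaIntegrand p q).aestronglyMeasurable (ae_of_all _ fun x => ?_)
  rw [norm_cauchyBetaIntegrand]
  gcongr
  calc 1 + x ^ 2 = √(1 + x ^ 2) ^ 2 := (sq_sqrt (by positivity)).symm
    _ ≤ √(1 + x ^ 2) ^ (p + q) := pow_le_pow_right₀ (one_le_sqrt_one_add_sq x) h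

lemma tendsto_cauchyBetaIntegrand_cocompact {p q : ℕ} (h : p + q ≠ 0) :
    Filter.Tendsto (cauchyBetaIntegrand p q) (Filter.cocompact ℝ) (nhds 0) := by
  have hnorm := tendsto_norm_cocompact_atTop (E := ℝ)
  refine squeeze_zero_norm' ?_ (tendsto_inv_atTop_zero.comp hnorm)
  filter_upwards [hnorm.eventually_gt_atTop 0] with x hx
  rw [norm_cauchyBetaIntegrand]
  refine inv_anti₀ hx ?_
  calc ‖x‖ ≤ √(1 + x ^ 2) := abs_le_sqrt (by linarith)
    _ ≤ √(1 + x ^ 2) ^ (p + q) := le_self_pow₀ (one_le_sqrt_one_add_sq x) h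

lemma hasDerivAt_cauchyBetaIntegrand_zero_right (n : ℕ) (x : ℝ) :
    HasDerivAt (fun y => Complex.I / (n + 1) * cauchyBetaIntegrand (n + 1) 0 y)
      (cauchyBetaIntegrand (n + 2) 0 x) x := by
  have hne := one_add_mul_I_ne_zero x
  have hn : (n : ℂ) + 1 ≠ 0 := mod_cast n.succ_ne_zero
  have hlin : HasDerivAt (fun y : ℝ => 1 + (y : ℂ) * Complex.I) Complex.I x := by
    simpa using ((hasDerivAt_id x).ofReal_comp.mul_const Complex.I).const_add 1
  have hinv := ((hlin.fun_pow (n + 1)).fun_inv (pow_ne_zero _ hne)).const_mul (Complex.I / (n + 1))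
  simp only [cauchyBetaIntegrand, pow_zero, inv_one, mul_one]
  refine hinv.congr_deriv ?_
  generalize 1 + (x : ℂ) * Complex.I = z at hne
  push_cast [Nat.add_sub_cancel]
  field_simp
  linear_combination -z ^ (2 * n + 2) * Complex.I_sq

lemma integral_cauchyBetaIntegrand_zero_right (n : ℕ) :
    ∫ x, cauchyBetaIntegrand (n + 2) 0 x = 0 := by
  have hlim : Filter.Tendsto (fun x => Complex.I / (n + 1) * cauchyBetaIntegrand (n + 1) 0 x)
      (Filter.cocompact ℝ) (nhds 0) := by
    simpa using (tendsto_cauchyBetaIntegrand_cocompact (by lia)).const_mul (Complex.I / (n + 1))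
  simpa using integral_of_hasDerivAt_of_tendsto (hasDerivAt_cauchyBetaIntegrand_zero_right n)
    (integrable_cauchyBetaIntegrand (by lia)) (hlim.mono_left atBot_le_cocompact)
    (hlim.mono_left atTop_le_cocompact)

lemma integral_cauchyBetaIntegrand_zero_left (n : ℕ) :
    ∫ x, cauchyBetaIntegrand 0 (n + 2) x = 0 := by
  rw [← integral_cauchyBetaIntegrand_zero_right n, ← integral_neg_eq_self]
  simp only [cauchyBetaIntegrand_neg]

lemma integral_cauchyBetaIntegrand_succ_succ {p q : ℕ} (h : 1 ≤ p + q) :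
    ∫ x, cauchyBetaIntegrand (p + 1) (q + 1) x =
      ((∫ x, cauchyBetaIntegrand (p + 1) q x) + ∫ x, cauchyBetaIntegrand p (q + 1) x) / 2 := by
  simp_rw [cauchyBetaIntegrand_succ_succ p q]
  rw [integral_div, integral_add (integrable_cauchyBetaIntegrand (by lia))
    (integrable_cauchyBetaIntegrand (by lia))]

lemma integral_cauchyBetaIntegrand_one_one : ∫ x, cauchyBetaIntegrand 1 1 x = π := by
  simp only [cauchyBetaIntegrand_self, pow_one]
  rw [integral_complex_ofReal, integral_univ_inv_one_add_sq]

-- `cauchyBetaIntegrand_succ_succ` becomes Pascal's rule, since the boundary integrals vanish.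
theorem integral_cauchyBetaIntegrand (m n : ℕ) :
    ∫ x, cauchyBetaIntegrand (m + 1) (n + 1) x = π * ((m + n).choose m / 2 ^ (m + n)) := by
  induction m generalizing n with
  | zero =>
    induction n with
    | zero => simp [integral_cauchyBetaIntegrand_one_one]
    | succ n ih =>
      rw [integral_cauchyBetaIntegrand_succ_succ (by lia), ih,
        integral_cauchyBetaIntegrand_zero_left]
      simp only [zero_add, Nat.choose_zero_right, pow_succ]
      field_simp
      ring
  | succ m ihm =>
    induction n with
    | zero =>
      rw [integral_cauchyBetaIntegrand_succ_succ (by lia), ihm,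
        integral_cauchyBetaIntegrand_zero_right]
      simp only [add_zero, Nat.choose_self, pow_succ]
      field_simp
      ring
    | succ n ihn =>
      rw [integral_cauchyBetaIntegrand_succ_succ (by lia), ihm, ihn,
        show m + 1 + (n + 1) = m + n + 1 + 1 by ring, Nat.choose_succ_succ,
        add_right_comm m 1 n, ← add_assoc m n 1, pow_succ _ (m + n + 1)]
      push_cast
      field_simp
      ring

lemma norm_cauchyBetaIntegrand_odd_odd (m n : ℕ) (x : ℝ) :
    (‖cauchyBetaIntegrand (2 * m + 1) (2 * n + 1) x‖ : ℂ) =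
      cauchyBetaIntegrand (m + n + 1) (m + n + 1) x := by
  rw [norm_cauchyBetaIntegrand, cauchyBetaIntegrand_self,
    show 2 * m + 1 + (2 * n + 1) = 2 * (m + n + 1) by ring, pow_mul, sq_sqrt (by positivity)]

lemma integral_norm_cauchyBetaIntegrand_odd_odd (m n : ℕ) :
    ∫ x, ‖cauchyBetaIntegrand (2 * m + 1) (2 * n + 1) x‖ = π * wallisRatio (m + n) := by
  have hpow : (2 : ℂ) ^ (m + n + (m + n)) = 4 ^ (m + n) := by
    rw [← two_mul, pow_mul]
    norm_num
  apply Complex.ofReal_injective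
  rw [← integral_complex_ofReal]
  simp only [norm_cauchyBetaIntegrand_odd_odd]
  rw [integral_cauchyBetaIntegrand, hpow, wallisRatio, Nat.centralBinom, two_mul]
  push_cast
  rfl

lemma hasSum_integral_tsum_mul_cauchyBetaIntegrand {c : ℕ × ℕ → ℂ}
    (hc : Summable fun p => ‖c p‖ * wallisRatio (p.1 + p.2)) :
    HasSum (fun p => π * (c p * ((2 * (p.1 + p.2)).choose (2 * p.1) / 4 ^ (p.1 + p.2))))
      (∫ x, ∑' p, c p * cauchyBetaIntegrand (2 * p.1 + 1) (2 * p.2 + 1) x) := by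
  have hterm (p : ℕ × ℕ) : ∫ x, c p * cauchyBetaIntegrand (2 * p.1 + 1) (2 * p.2 + 1) x =
      π * (c p * ((2 * (p.1 + p.2)).choose (2 * p.1) / 4 ^ (p.1 + p.2))) := by
    rw [integral_const_mul, integral_cauchyBetaIntegrand, ← mul_add, pow_mul]
    norm_num
    ring
  simp only [← hterm]
  refine hasSum_integral_of_summable_integral_norm
    (fun p => (integrable_cauchyBetaIntegrand (by lia)).const_mul _) ?_
  simp only [norm_mul, integral_const_mul, integral_norm_cauchyBetaIntegrand_odd_odd]
  simpa only [mul_left_comm] using hc.mul_left π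

/-! ### The product of the elliptic integrals -/

lemma summable_norm_mul_inv_pow_two_mul {c : ℕ → ℂ} {C : ℝ} (hc : ∀ n, ‖c n‖ ≤ C) {z : ℂ}
    (hz : 1 < ‖z‖) : Summable fun n => ‖c n * (z ^ (2 * n))⁻¹‖ := by
  have hratio : (‖z‖ ^ 2)⁻¹ < 1 := inv_lt_one_of_one_lt₀ (one_lt_pow₀ hz two_ne_zero)
  refine .of_nonneg_of_le (fun _ => norm_nonneg _) (fun n => ?_)
    ((summable_geometric_of_lt_one (by positivity) hratio).mul_left C)
  rw [norm_mul, norm_inv, norm_pow, pow_mul, inv_pow]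
  gcongr
  exact hc n

lemma conj_Kp (x : ℝ) : starRingEnd ℂ (Kp x) = Km x := by
  simp only [Kp, Km, map_mul, Complex.conj_ofReal, Complex.conj_tsum]
  simp [sub_eq_add_neg]

lemma Kp_neg (x : ℝ) : Kp (-x) = Km x := by
  simp [Kp, Km, sub_eq_add_neg]

lemma Kp_mul_Km (x : ℝ) : Kp x * Km x = Complex.normSq (Kp x) := by
  rw [← conj_Kp, Complex.mul_conj]

lemma re_Kp_mul_Km_abs (x : ℝ) : (Kp |x| * Km |x|).re = (Kp x * Km x).re := by
  rcases abs_choice x with h | h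
  · rw [h]
  · rw [h, Kp_mul_Km, Kp_mul_Km, Kp_neg, ← conj_Kp, Complex.normSq_conj]

lemma Kp_mul_Km_div_one_add_sq {x : ℝ} (hx : x ≠ 0) :
    Kp x * Km x / (1 + x ^ 2) = π ^ 2 / 4 * ∑' p : ℕ × ℕ,
      ((wallisRatio p.1 ^ 2 * wallisRatio p.2 ^ 2 : ℝ) : ℂ) *
        cauchyBetaIntegrand (2 * p.1 + 1) (2 * p.2 + 1) x := by
  have hlt : 1 < √(1 + x ^ 2) := by
    rw [lt_sqrt zero_le_one]
    linarith [sq_pos_of_ne_zero hx]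
  have hcoeff (n : ℕ) : ‖((wallisRatio n ^ 2 : ℝ) : ℂ)‖ ≤ 1 := by
    rw [Complex.norm_of_nonneg (by positivity)]
    exact pow_le_one₀ (wallisRatio_pos n).le (wallisRatio_le_one n)
  have hprod := tsum_mul_tsum_of_summable_norm
    (summable_norm_mul_inv_pow_two_mul hcoeff (hlt.trans_eq (norm_one_add_mul_I x).symm))
    (summable_norm_mul_inv_pow_two_mul hcoeff (hlt.trans_eq (norm_one_sub_mul_I x).symm))
  have hinv : (1 + (x : ℂ) ^ 2)⁻¹ = cauchyBetaIntegrand 1 1 x := by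
    simp [cauchyBetaIntegrand_self]
  simp only [Kp, Km, ris_half_div_factorial]
  rw [mul_mul_mul_comm, hprod, div_eq_mul_inv, mul_assoc, ← tsum_mul_right, hinv]
  congr 1
  · push_cast
    ring
  · refine tsum_congr fun p => ?_
    simp only [cauchyBetaIntegrand, pow_succ, mul_inv]
    push_cast
    ring

lemma integral_Kp_mul_Km_div_one_add_sq :
    ∫ x : ℝ, Kp x * Km x / (1 + x ^ 2) = ((π ^ 3 / 4 * ∑' p, watsonTerm p : ℝ) : ℂ) := by
  have hseries : (fun x : ℝ => Kp x * Km x / (1 + x ^ 2)) =ᵐ[volume] fun x =>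
      π ^ 2 / 4 * ∑' p : ℕ × ℕ, ((wallisRatio p.1 ^ 2 * wallisRatio p.2 ^ 2 : ℝ) : ℂ) *
        cauchyBetaIntegrand (2 * p.1 + 1) (2 * p.2 + 1) x := by
    filter_upwards [Measure.ae_ne volume 0] with x hx using Kp_mul_Km_div_one_add_sq hx
  have hsum := hasSum_integral_tsum_mul_cauchyBetaIntegrand
    (c := fun p => ((wallisRatio p.1 ^ 2 * wallisRatio p.2 ^ 2 : ℝ) : ℂ)) (by
      simpa [norm_mul, abs_of_pos (wallisRatio_pos _)] using summable_wallisRatio_sq_mul_sq_mul_add)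
  rw [integral_congr_ae hseries, integral_const_mul, ← hsum.tsum_eq, tsum_mul_left]
  push_cast [watsonTerm]
  ring

lemma integral_re_Kp_mul_Km_div_one_add_sq :
    ∫ x : ℝ, (Kp x * Km x).re / (1 + x ^ 2) = π ^ 3 / 4 * ∑' p, watsonTerm p := by
  apply Complex.ofReal_injective
  rw [← integral_Kp_mul_Km_div_one_add_sq, ← integral_complex_ofReal]
  refine integral_congr_ae (ae_of_all _ fun x => ?_)
  simp [Kp_mul_Km]

theorem integral_Ioi_Kp_mul_Km_eq_tsum :
    ∫ x in Ioi (0 : ℝ), (Kp x * Km x).re / (1 + x ^ 2) = π ^ 3 / 8 * ∑' p, watsonTerm p := by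
  have heven := integral_comp_abs (f := fun x => (Kp x * Km x).re / (1 + x ^ 2))
  simp only [re_Kp_mul_Km_abs, sq_abs] at heven
  linarith [heven, integral_re_Kp_mul_Km_div_one_add_sq]

theorem watson_one_eq_parseval :
    (1 / (4 * π^4)) *
      (∫ p1 in (0:ℝ)..π, ∫ p2 in (0:ℝ)..π, ∫ p3 in (0:ℝ)..π, ∫ p4 in (0:ℝ)..π,
        1 / (1 - (1/4) * (cos p1 + cos p2 + cos p3 + cos p4)))
    = (2 / π^3) * ∫ x in Ioi (0:ℝ), (Kp x * Km x).re / (1 + x^2) := by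
  rw [watson_integral_eq_tsum, integral_Ioi_Kp_mul_Km_eq_tsum]
  field_simp
  ring
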